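/- arXiv:0710.5350 — 2 statements merged into one kernel-verified Lean document; each statement's English description precedes it below -/
import Mathlib

section
/- The 16×16 matrix G = (1/4)·(Π_1+Π_2)⊗(Π_1+Π_2) (first factor on qubits A'B', second on A''B'') is separable across the partition A=(A',A''), B=(B',B''). -/
open Matrix Complex
open scoped Kronecker ComplexOrder

noncomputable section
namespace Paper

abbrev Q2 := Fin 2 × Fin 2
abbrev M4 := Matrix Q2 Q2 ℂ
abbrev M16 := Matrix (Q2 × Q2) (Q2 × Q2) ℂ

/-- `1/√2` as a complex number. -/
def invSqrt2 : ℂ := ((Real.sqrt 2)⁻¹ : ℝ)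

/-- The four Bell states `|Φ₁⟩,…,|Φ₄⟩` as vectors in `ℂ²⊗ℂ²`
(product basis indexed by `Fin 2 × Fin 2`). -/
def bell : Fin 4 → Q2 → ℂ :=
  ![fun p => !![invSqrt2, 0; 0, invSqrt2] p.1 p.2,
    fun p => !![invSqrt2, 0; 0, -invSqrt2] p.1 p.2,
    fun p => !![0, invSqrt2; invSqrt2, 0] p.1 p.2,
    fun p => !![0, invSqrt2; -invSqrt2, 0] p.1 p.2]

/-- The Bell projectors `Π_i = |Φ_i⟩⟨Φ_i|`. -/
def BellProj (i : Fin 4) : M4 := vecMulVec (bell i) (star (bell i))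

/-- The Pauli matrices `σ_x, σ_y, σ_z`. -/
def pauli : Fin 3 → Matrix (Fin 2) (Fin 2) ℂ :=
  ![!![0, 1; 1, 0], !![0, -I; I, 0], !![1, 0; 0, -1]]

/-- Reindexing `((a',b'),(a'',b'')) ↦ ((a',a''),(b',b''))`. -/
def swapMid : (Q2 × Q2) ≃ (Q2 × Q2) where
  toFun p := ((p.1.1, p.2.1), (p.1.2, p.2.2))
  invFun p := ((p.1.1, p.2.1), (p.1.2, p.2.2))
  left_inv _ := rfl
  right_inv _ := rfl

/-- The rank-one matrix `x x†`. -/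
def pureMat {d : Type*} (x : d → ℂ) : Matrix d d ℂ := vecMulVec x (star x)

/-- Separability of a 16×16 four-qubit matrix (qubit order A',B',A'',B'')
across the partition A = (A',A''), B = (B',B''). -/
def SepAB (ρ : M16) : Prop :=
  ∃ (n : ℕ) (x y : Fin n → Q2 → ℂ),
    (Matrix.reindex swapMid swapMid ρ) = ∑ k, (pureMat (x k)) ⊗ₖ (pureMat (y k))


theorem invSqrt2_sq : invSqrt2 * invSqrt2 = 1 / 2 := by
  unfold invSqrt2
  rw [← Complex.ofReal_mul, ← mul_inv, Real.mul_self_sqrt (by norm_num)]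
  norm_num

theorem star_invSqrt2 : (starRingEnd ℂ) invSqrt2 = invSqrt2 := by
  unfold invSqrt2
  exact Complex.conj_ofReal _

theorem sum_proj (p q : Q2) : (BellProj 0 + BellProj 1) p q
    = if p = q ∧ p.1 = p.2 then 1 else 0 := by
  obtain ⟨a, b⟩ := p
  obtain ⟨c, d⟩ := q
  fin_cases a <;> fin_cases b <;> fin_cases c <;> fin_cases d <;>
    simp [BellProj, bell, vecMulVec_apply, star_invSqrt2, invSqrt2_sq] <;> norm_num

/-- The state `G = (1/4)·(Π₁+Π₂) ⊗ (Π₁+Π₂)` is separable across the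
partition A = (A',A''), B = (B',B''). -/
theorem stmt3 :
    SepAB ((1 / 4 : ℂ) • ((BellProj 0 + BellProj 1) ⊗ₖ (BellProj 0 + BellProj 1))) := by
  refine ⟨4, fun k p => if finProdFinEquiv (m := 2) (n := 2) p = k then 1 / 2 else 0,
    fun k p => if finProdFinEquiv (m := 2) (n := 2) p = k then 1 else 0, ?_⟩
  rw [← (finProdFinEquiv (m := 2) (n := 2)).sum_comp]
  ext ⟨⟨a, b⟩, ⟨c, d⟩⟩ ⟨⟨a', b'⟩, ⟨c', d'⟩⟩
  simp only [reindex_apply, submatrix_apply, Matrix.smul_apply, kroneckerMap_apply, sum_proj,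
    Matrix.sum_apply, pureMat, vecMulVec_apply, Pi.star_apply, EmbeddingLike.apply_eq_iff_eq,
    swapMid, Equiv.coe_fn_symm_mk, Fintype.sum_prod_type, Fin.sum_univ_two, Prod.mk.injEq]
  fin_cases a <;> fin_cases b <;> fin_cases c <;> fin_cases d <;> simp [Complex.conj_ofNat] <;>
    (try (fin_cases a' <;> fin_cases b' <;> fin_cases c' <;> fin_cases d' <;> simp [Complex.conj_ofNat] <;> norm_num))

end Paper
end
end

section
/- Let W_3 be the 4×4 matrix with rows (3,3,1,−1), (3,−1,1,3), (1,1,3,1), (−1,−1,1,−1), and let Z_{w,3} = Σ_{i,j} [W_3]_{ij} Π_i⊗Π_j (first Bell projector on qubits A'B', second on A''B''). Then Z_{w,3} is an entanglement witness for the partition A=(A',A''), B=(B',B''): tr(Z_{w,3} ρ) ≥ 0 for every 16×16 matrix ρ that is separable across this partition. -/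
open Matrix Complex
open scoped Kronecker ComplexOrder

noncomputable section
namespace Paper

/-- The witness matrix `W3`. -/
def W3 : Matrix (Fin 4) (Fin 4) ℝ :=
  !![3, 3, 1, -1; 3, -1, 1, 3; 1, 1, 3, 1; -1, -1, 1, -1]

def uv (a b c d a' b' c' d' : ℝ) : Fin 10 → ℝ :=
  ![2*(a*b+a'*b') + 2*(c*d+c'*d'),
    2*(a*c+a'*c') + 2*(b*d+b'*d'),
    2*(a*c'-a'*c) + 2*(b*d'-b'*d),
    a^2+a'^2+b^2+b'^2-c^2-c'^2-d^2-d'^2,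
    2*(a*d'-a'*d) - 2*(b*c'-b'*c),
    2*(a*c+a'*c') - 2*(b*d+b'*d'),
    -2*(a*d+a'*d') + 2*(b*c+b'*c'),
    2*(a*c'-a'*c) - 2*(b*d'-b'*d),
    2*(a*b'-a'*b) - 2*(c*d'-c'*d),
    a^2+a'^2-b^2-b'^2-c^2-c'^2+d^2+d'^2]

def nn (a b c d a' b' c' d' : ℝ) : ℝ := a^2+a'^2+b^2+b'^2+c^2+c'^2+d^2+d'^2

def ep : Fin 10 → ℝ := ![1,1,1,1,1,1,-1,-1,-1,1]

lemma uv_sq (a b c d a' b' c' d' : ℝ) :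
    ∑ i, (uv a b c d a' b' c' d' i)^2 = 2 * (nn a b c d a' b' c' d')^2 := by
  simp [Fin.sum_univ_succ, uv, nn]
  ring

lemma ep_sq (i : Fin 10) : (ep i)^2 = 1 := by
  fin_cases i <;> simp [ep]

lemma cs (u v : Fin 10 → ℝ) (R S : ℝ) (hR : 0 ≤ R) (hS : 0 ≤ S)
    (hu : ∑ i, (u i)^2 = 2 * R^2) (hv : ∑ i, (v i)^2 = 2 * S^2) :
    0 ≤ 2 * R * S + ∑ i, ep i * u i * v i := by
  have h := Finset.sum_mul_sq_le_sq_mul_sq Finset.univ (fun i => ep i * u i) v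
  simp only [mul_pow, ep_sq, one_mul] at h
  rw [hu, hv] at h
  have h2 : (∑ i, ep i * u i * v i)^2 ≤ (2 * R * S)^2 := by nlinarith
  have := abs_le_of_sq_le_sq h2 (by positivity)
  linarith [(abs_le.mp this).1]

lemma inv2 : invSqrt2 * invSqrt2 = 1/2 := by
  unfold invSqrt2
  rw [← Complex.ofReal_mul, ← mul_inv, Real.mul_self_sqrt (by norm_num)]
  norm_num

lemma star_inv : star invSqrt2 = invSqrt2 := by
  simp [invSqrt2]

def amp (x y : Q2 → ℂ) (i j : Fin 4) : ℂ :=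
  ∑ p : Q2, ∑ q : Q2, star (bell i p) * star (bell j q) * (x (p.1, q.1) * y (p.2, q.2))

/-- unnormalised Bell coefficients -/
def bs : Fin 4 → Fin 2 → Fin 2 → ℝ :=
  ![!![1, 0; 0, 1], !![1, 0; 0, -1], !![0, 1; 1, 0], !![0, 1; -1, 0]]

lemma bell_eq (i : Fin 4) (p : Q2) : bell i p = invSqrt2 * (bs i p.1 p.2 : ℂ) := by
  obtain ⟨a, b⟩ := p
  fin_cases i <;> fin_cases a <;> fin_cases b <;> simp [bell, bs]

def ampr (x y : Q2 → ℂ) (i j : Fin 4) : ℂ :=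
  ∑ p : Q2, ∑ q : Q2, ((bs i p.1 p.2 * bs j q.1 q.2 : ℝ) : ℂ) * (x (p.1, q.1) * y (p.2, q.2))

lemma amp_eq (x y : Q2 → ℂ) (i j : Fin 4) : amp x y i j = 1/2 * ampr x y i j := by
  unfold amp ampr
  simp only [bell_eq, star_mul, star_inv, Finset.mul_sum]
  refine Finset.sum_congr rfl fun p _ => Finset.sum_congr rfl fun q _ => ?_
  rw [← inv2]
  have (r : ℝ) : star (r : ℂ) = r := Complex.conj_ofReal r
  rw [this, this]
  push_cast
  ring

lemma core_eq (x y : Q2 → ℂ) :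
    ∑ i, ∑ j, W3 i j * normSq (ampr x y i j) =
      2 * (2 * nn (x (0,0)).re (x (0,1)).re (x (1,0)).re (x (1,1)).re
            (x (0,0)).im (x (0,1)).im (x (1,0)).im (x (1,1)).im *
        nn (y (0,0)).re (y (0,1)).re (y (1,0)).re (y (1,1)).re
            (y (0,0)).im (y (0,1)).im (y (1,0)).im (y (1,1)).im +
       ∑ i, ep i * uv (x (0,0)).re (x (0,1)).re (x (1,0)).re (x (1,1)).re
            (x (0,0)).im (x (0,1)).im (x (1,0)).im (x (1,1)).im i *
        uv (y (0,0)).re (y (0,1)).re (y (1,0)).re (y (1,1)).re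
            (y (0,0)).im (y (0,1)).im (y (1,0)).im (y (1,1)).im i) := by
  simp [Fin.sum_univ_succ, Fintype.sum_prod_type, ampr, bs, W3, normSq_apply, uv, nn, ep]
  ring

lemma core (x y : Q2 → ℂ) : 0 ≤ ∑ i, ∑ j, W3 i j * normSq (amp x y i j) := by
  have h : ∑ i, ∑ j, W3 i j * normSq (amp x y i j)
      = 1/4 * ∑ i, ∑ j, W3 i j * normSq (ampr x y i j) := by
    simp only [amp_eq, Finset.mul_sum, normSq_mul]
    refine Finset.sum_congr rfl fun p _ => Finset.sum_congr rfl fun q _ => ?_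
    norm_num [normSq_apply]
    ring
  rw [h, core_eq]
  have := cs _ _ _ _ (by unfold nn; positivity) (by unfold nn; positivity)
    (uv_sq (x (0,0)).re (x (0,1)).re (x (1,0)).re (x (1,1)).re
            (x (0,0)).im (x (0,1)).im (x (1,0)).im (x (1,1)).im)
    (uv_sq (y (0,0)).re (y (0,1)).re (y (1,0)).re (y (1,1)).re
            (y (0,0)).im (y (0,1)).im (y (1,0)).im (y (1,1)).im)
  linarith

lemma tr_pure {d : Type*} [Fintype d] (w v : d → ℂ) :
    (pureMat w * pureMat v).trace = ((normSq (star w ⬝ᵥ v) : ℝ) : ℂ) := by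
  unfold pureMat
  rw [vecMulVec_mul_vecMulVec, trace_vecMulVec, normSq_eq_conj_mul_self, dotProduct_smul,
    ← star_def, star_dotProduct, star_star, smul_eq_mul, dotProduct_comm w]
  ring

lemma kron_pure (v w : Q2 → ℂ) :
    (vecMulVec v (star v)) ⊗ₖ (vecMulVec w (star w)) = pureMat (fun p : Q2 × Q2 => v p.1 * w p.2) := by
  ext p q
  simp [pureMat, vecMulVec_apply]
  ring

/-- STATEMENT: `Z_{w,3} = Σ_{ij} [W3]_{ij} Π_i⊗Π_j` is an entanglement witness for
the partition A = (A',A''), B = (B',B''): `tr(Z_{w,3} ρ) ≥ 0` for every matrix `ρ`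
separable across this partition. -/
theorem stmt7 (ρ : M16) (hρ : SepAB ρ) :
    0 ≤ ((∑ i, ∑ j, (W3 i j : ℂ) • (BellProj i ⊗ₖ BellProj j)) * ρ).trace := by
  obtain ⟨n, x, y, h⟩ := hρ
  have hρ' : ρ = ∑ k, pureMat (fun p : Q2 × Q2 => x k (p.1.1, p.2.1) * y k (p.1.2, p.2.2)) := by
    ext p q
    have := congrFun (congrFun h (swapMid p)) (swapMid q)
    simp only [Matrix.reindex_apply, Matrix.submatrix_apply, Equiv.symm_apply_apply] at this
    rw [this, Matrix.sum_apply, Matrix.sum_apply]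
    refine Finset.sum_congr rfl fun k _ => ?_
    simp [pureMat, vecMulVec_apply, swapMid]
    ring
  have key : ((∑ i, ∑ j, (W3 i j : ℂ) • (BellProj i ⊗ₖ BellProj j)) * ρ).trace
      = ((∑ k, ∑ i, ∑ j, W3 i j * normSq (amp (x k) (y k) i j) : ℝ) : ℂ) := by
    rw [hρ', Finset.mul_sum, Matrix.trace_sum]
    push_cast
    refine Finset.sum_congr rfl fun k _ => ?_
    simp only [Finset.sum_mul, Matrix.trace_sum]
    refine Finset.sum_congr rfl fun i _ => Finset.sum_congr rfl fun j _ => ?_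
    rw [Matrix.smul_mul, Matrix.trace_smul, smul_eq_mul, BellProj, BellProj, kron_pure, tr_pure]
    congr 3
    unfold dotProduct amp
    rw [Fintype.sum_prod_type]
    refine Finset.sum_congr rfl fun p _ => Finset.sum_congr rfl fun q _ => ?_
    simp [mul_comm]
  rw [key]
  exact_mod_cast Finset.sum_nonneg fun k _ => core (x k) (y k)

end Paper
end
end
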